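/- For every natural number m, 2^{2(m+1) − s(0, m+1)}·β(0, m+1) is an integer; equivalently, for the Laurent coefficients b_m = β(0, m+1) of the exterior map of the Mandelbrot set, if b_m ≠ 0 then −ν(b_m) ≤ 2(m+1) − s(0, m+1), where ν is the 2-adic valuation on ℚ. -/

import Mathlib

/-- The base-2 sum-of-digits function of degree `n`: the sum of the binary
digits of `m` at positions `≥ n`, i.e. the binary digit sum of `⌊m / 2^n⌋`. -/
def s (n m : ℕ) : ℕ := (Nat.digits 2 (m / 2 ^ n)).sum

def tt (q : ℕ) : ℕ := (Nat.digits 2 q).sum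

lemma tt_rec (q : ℕ) : tt q = q % 2 + tt (q / 2) := by
  unfold tt
  rcases Nat.eq_zero_or_pos q with h | h
  · subst h; simp
  · rw [Nat.digits_def' (by norm_num) h]; simp

lemma tt_zero : tt 0 = 0 := by simp [tt]

lemma tt_one : tt 1 = 1 := by simp [tt]

lemma tt_two : tt 2 = 1 := by rw [tt_rec]; simp [tt_one]

lemma tt_succ (q : ℕ) : tt (q + 1) ≤ tt q + 1 := by
  induction q using Nat.strong_induction_on with
  | _ q ih =>
    rw [tt_rec (q + 1), tt_rec q]
    rcases Nat.mod_two_eq_zero_or_one q with h | h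
    · have h1 : (q + 1) / 2 = q / 2 := by omega
      rw [h1]; omega
    · have h1 : (q + 1) / 2 = q / 2 + 1 := by omega
      rw [h1]
      have := ih (q / 2) (by omega)
      omega

lemma tt_add (a b : ℕ) : tt (a + b) ≤ tt a + tt b := by
  induction a using Nat.strong_induction_on generalizing b with
  | _ a ih =>
    rcases Nat.eq_zero_or_pos a with h0 | h0
    · subst h0; simp
    rw [tt_rec (a + b), tt_rec a, tt_rec b]
    have := ih (a / 2) (by omega) (b / 2)
    by_cases h : a % 2 = 1 ∧ b % 2 = 1
    · have h1 : (a + b) / 2 = a / 2 + b / 2 + 1 := by omega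
      rw [h1]
      have := tt_succ (a / 2 + b / 2)
      omega
    · have h1 : (a + b) / 2 = a / 2 + b / 2 := by omega
      rw [h1]; omega

lemma tt_pos (q : ℕ) (h : 1 ≤ q) : 1 ≤ tt q := by
  induction q using Nat.strong_induction_on with
  | _ q ih =>
    rw [tt_rec q]
    rcases Nat.mod_two_eq_zero_or_one q with h1 | h1
    · have := ih (q / 2) (by omega) (by omega)
      omega
    · omega

lemma tt_double (q : ℕ) : tt (q + q) = tt q := by
  rw [tt_rec]
  have h1 : (q + q) / 2 = q := by omega
  rw [h1]; omega

lemma s_eq (n m : ℕ) : s n m = tt (m / 2 ^ n) := rfl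

lemma s_succ (n m : ℕ) : s n m = (m / 2 ^ n) % 2 + s (n + 1) m := by
  rw [s_eq, s_eq, tt_rec, Nat.div_div_eq_div_mul, pow_succ]

lemma s_le (n m : ℕ) : s n m ≤ tt m := by
  induction n with
  | zero => simp [s_eq]
  | succ n ih => have := s_succ n m; omega

lemma s_add (n a b : ℕ) : s n (a + b) ≤ s n a + s n b + (if n = 0 then 0 else 1) := by
  split_ifs with h
  · subst h; simpa [s_eq] using tt_add a b
  · simp only [s_eq]
    rw [Nat.add_div (by positivity)]
    have := tt_add (a / 2 ^ n) (b / 2 ^ n)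
    have := tt_succ (a / 2 ^ n + b / 2 ^ n)
    split_ifs
    · omega
    · simp only [add_zero]; omega

lemma s_shift (n j m : ℕ) (h : m + 1 = j + 2 ^ (n + 1)) : s n m ≤ 1 + s 0 j := by
  have h2 := s_le n j
  have h0 : s 0 j = tt j := by simp [s_eq]
  rw [h0]
  rw [s_eq] at *
  have hp : 0 < 2 ^ n := by positivity
  have hdm := Nat.div_add_mod j (2 ^ n)
  have hml := Nat.mod_lt j hp
  rw [pow_succ] at h
  generalize 2 ^ n = p at *
  generalize j / p = q at *
  generalize j % p = r at *
  rcases Nat.eq_zero_or_pos r with hr | hr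
  · have h3 : m / p = q + 1 := by
      rw [show m = (p - 1) + p * (q + 1) by rw [mul_add]; omega, Nat.add_mul_div_left _ _ hp,
        Nat.div_eq_of_lt (by omega)]
      omega
    rw [h3]
    have := tt_succ q
    omega
  · have h3 : m / p = q + 2 := by
      rw [show m = (r - 1) + p * (q + 2) by rw [mul_add]; omega, Nat.add_mul_div_left _ _ hp,
        Nat.div_eq_of_lt (by omega)]
      omega
    rw [h3]
    have := tt_add q 2
    have := tt_two
    omega

def PP (e : ℤ) (x : ℚ) : Prop := ∃ z : ℤ, (2 : ℚ) ^ e * x = z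

lemma PP.mono {e f : ℤ} {x : ℚ} (h : PP e x) (hef : e ≤ f) : PP f x := by
  obtain ⟨z, hz⟩ := h
  obtain ⟨k, rfl⟩ := Int.le.dest hef
  refine ⟨2 ^ k * z, ?_⟩
  rw [zpow_add₀ (by norm_num), zpow_natCast]
  push_cast
  rw [← hz]; ring

lemma PP.add {e : ℤ} {x y : ℚ} (h : PP e x) (h' : PP e y) : PP e (x + y) := by
  obtain ⟨z, hz⟩ := h
  obtain ⟨w, hw⟩ := h'
  exact ⟨z + w, by push_cast; rw [← hz, ← hw]; ring⟩

lemma PP.sub {e : ℤ} {x y : ℚ} (h : PP e x) (h' : PP e y) : PP e (x - y) := by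
  obtain ⟨z, hz⟩ := h
  obtain ⟨w, hw⟩ := h'
  exact ⟨z - w, by push_cast; rw [← hz, ← hw]; ring⟩

lemma PP.zero {e : ℤ} : PP e 0 := ⟨0, by simp⟩

lemma PP.mul {e f : ℤ} {x y : ℚ} (h : PP e x) (h' : PP f y) : PP (e + f) (x * y) := by
  obtain ⟨z, hz⟩ := h
  obtain ⟨w, hw⟩ := h'
  exact ⟨z * w, by push_cast; rw [← hz, ← hw, zpow_add₀ (by norm_num)]; ring⟩

lemma PP.double {e : ℤ} {x : ℚ} (h : PP e x) : PP (e - 1) (x + x) := by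
  obtain ⟨z, hz⟩ := h
  exact ⟨z, by rw [← hz, zpow_sub_one₀ (by norm_num)]; ring⟩

lemma PP.half {e : ℤ} {x : ℚ} (h : PP (e - 1) x) : PP e (1 / 2 * x) := by
  obtain ⟨z, hz⟩ := h
  exact ⟨z, by rw [← hz, zpow_sub_one₀ (by norm_num)]; ring⟩

lemma PP.sum {e : ℤ} {S : Finset ℕ} {T : ℕ → ℚ} (h : ∀ k ∈ S, PP e (T k)) :
    PP e (∑ k ∈ S, T k) :=
  Finset.sum_induction _ _ (fun _ _ => PP.add) PP.zero h

open Finset in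
lemma PP.symm_sum {e : ℤ} {a b : ℕ} {T : ℕ → ℚ} (hT : ∀ k ∈ Icc a b, T (a + b - k) = T k)
    (h : ∀ k ∈ Icc a b, PP e (T k)) (h' : ∀ k ∈ Icc a b, 2 * k = a + b → PP (e - 1) (T k)) :
    PP (e - 1) (∑ k ∈ Icc a b, T k) := by
  rw [← sum_filter_add_sum_filter_not (Icc a b) (fun k => 2 * k = a + b),
    ← sum_filter_add_sum_filter_not ((Icc a b).filter (fun k => ¬ 2 * k = a + b))
      (fun k => 2 * k < a + b)]
  refine PP.add (PP.sum fun k hk => ?_) ?_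
  · rw [mem_filter] at hk; exact h' k hk.1 hk.2
  · have : ∑ k ∈ ((Icc a b).filter (fun k => ¬ 2 * k = a + b)).filter
        (fun k => ¬ 2 * k < a + b), T k = ∑ k ∈ ((Icc a b).filter (fun k => ¬ 2 * k = a + b)).filter
        (fun k => 2 * k < a + b), T k := by
      refine sum_nbij' (fun k => a + b - k) (fun k => a + b - k) ?_ ?_ ?_ ?_ ?_
      · intro k hk; simp only [mem_filter, mem_Icc] at *; omega
      · intro k hk; simp only [mem_filter, mem_Icc] at *; omega
      · intro k hk; simp only [mem_filter, mem_Icc] at *; omega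
      · intro k hk; simp only [mem_filter, mem_Icc] at *; omega
      · intro k hk; simp only [mem_filter] at hk; exact (hT k hk.1.1).symm
    rw [this]
    exact PP.double (PP.sum fun k hk => h k (by simp only [mem_filter] at hk; exact hk.1.1))

def ff (n m : ℕ) : ℤ := 2 * (m : ℤ) + 4 - 2 ^ (n + 2) - s n m

lemma pow_ge (n : ℕ) : (4 : ℤ) + (if n = 0 then 0 else 4) ≤ 2 ^ (n + 2) := by
  rcases n with _ | n
  · simp
  · have : (1 : ℤ) ≤ 2 ^ n := one_le_pow₀ (by norm_num)
    simp only [Nat.add_eq_zero_iff, one_ne_zero, and_false, if_false]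
    have : (2 : ℤ) ^ (n + 1 + 2) = 8 * 2 ^ n := by ring
    omega

lemma ff_add (n a b : ℕ) : ff n a + ff n b ≤ ff n (a + b) := by
  have := s_add n a b
  have := pow_ge n
  unfold ff
  push_cast
  split_ifs at * <;> omega

lemma ff_double (n a : ℕ) (ha : 1 ≤ a) : ff n a + ff n a ≤ ff n (a + a) - 1 := by
  have := s_add n a a
  have := pow_ge n
  unfold ff
  push_cast
  split_ifs at * with h
  · subst h
    have h1 : s 0 (a + a) = s 0 a := by simpa [s_eq] using tt_double a
    have h2 : 1 ≤ s 0 a := by simpa [s_eq] using tt_pos a ha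
    omega
  · omega

lemma ff_succ (n m : ℕ) : ff (n + 1) m ≤ ff n m - 1 := by
  have := s_succ n m
  have := pow_ge n
  have : (2 : ℤ) ^ (n + 1 + 2) = 2 * 2 ^ (n + 2) := by ring
  unfold ff
  split_ifs at * <;> omega

lemma ff_shift (n j m : ℕ) (h : m + 1 = j + 2 ^ (n + 1)) : ff 0 j ≤ ff n m - 1 := by
  have := s_shift n j m h
  have h2 : (2 : ℤ) ^ (n + 2) = 2 * 2 ^ (n + 1) := by ring
  have h3 : (m : ℤ) + 1 = j + 2 ^ (n + 1) := by exact_mod_cast h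
  unfold ff
  norm_num
  omega

open Finset in
lemma main_PP (β : ℕ → ℕ → ℚ)
    (hβ0 : ∀ n, β n 0 = 1)
    (hβzero : ∀ n m, 1 ≤ m → m ≤ 2 ^ (n + 1) - 2 → β n m = 0)
    (hβrec : ∀ n m, 2 ^ (n + 1) - 1 ≤ m →
      β n m = (1 / 2) * (β (n + 1) m
        - ∑ k ∈ Icc (2 ^ (n + 1) - 1) (m + 1 - 2 ^ (n + 1)), β n k * β n (m - k)
        - β 0 (m + 1 - 2 ^ (n + 1))))
    (m : ℕ) : 1 ≤ m → ∀ n, PP (ff n m) (β n m) := by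
  induction m using Nat.strong_induction_on with
  | _ m ih =>
  intro hm n
  obtain ⟨d, hd⟩ : ∃ d, m ≤ n + d := ⟨m, by omega⟩
  induction d generalizing n with
  | zero =>
    rw [hβzero n m hm ?_]
    · exact PP.zero
    · have : n < 2 ^ n := Nat.lt_two_pow_self
      rw [pow_succ]; omega
  | succ d ihd =>
    by_cases hlt : m ≤ 2 ^ (n + 1) - 2
    · rw [hβzero n m hm hlt]; exact PP.zero
    have hp : 2 ≤ 2 ^ (n + 1) := by rw [pow_succ]; have := Nat.one_le_two_pow (n := n); omega
    rw [hβrec n m (by omega)]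
    apply PP.half
    refine PP.sub (PP.sub ((ihd (n + 1) (by omega)).mono (ff_succ n m)) ?_) ?_
    · by_cases hab : 2 ^ (n + 1) - 1 + (m + 1 - 2 ^ (n + 1)) = m
      · apply PP.symm_sum
        · intro k hk
          rw [mem_Icc] at hk
          rw [hab, mul_comm]
          congr 2
          omega
        · intro k hk
          rw [mem_Icc] at hk
          have := (ih k (by omega) (by omega) n).mul (ih (m - k) (by omega) (by omega) n)
          refine this.mono ?_
          have := ff_add n k (m - k)
          rwa [show k + (m - k) = m by omega] at this
        · intro k hk hk2
          rw [mem_Icc] at hk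
          have hmk : m = k + k := by omega
          have h1 := ih k (by omega) (by omega) n
          have := ff_double n k (by omega)
          rw [← hmk] at this
          rw [show m - k = k by omega]
          exact (h1.mul h1).mono this
      · omega
    · refine PP.mono ?_ (ff_shift n (m + 1 - 2 ^ (n + 1)) m (by omega))
      rcases Nat.eq_zero_or_pos (m + 1 - 2 ^ (n + 1)) with h | h
      · rw [h, hβ0]
        exact ⟨1, by simp [ff, s_eq, tt_zero]⟩
      · exact ih _ (by omega) h 0


open Finset in
/-- For `β : ℕ → ℕ → ℚ` satisfying the Ewing–Schober backward recursion, the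
rational `2^(2(m+1) - s(0, m+1))·β(0, m+1)` is an integer; equivalently, for
the Laurent coefficients `b_m = β(0, m+1)` one has
`-ν(b_m) ≤ 2(m+1) - s(0, m+1)` when `b_m ≠ 0`. -/
theorem two_pow_b_int (β : ℕ → ℕ → ℚ)
    (hβ0 : ∀ n, β n 0 = 1)
    (hβzero : ∀ n m, 1 ≤ m → m ≤ 2 ^ (n + 1) - 2 → β n m = 0)
    (hβrec : ∀ n m, 2 ^ (n + 1) - 1 ≤ m →
      β n m = (1 / 2) * (β (n + 1) m
        - ∑ k ∈ Icc (2 ^ (n + 1) - 1) (m + 1 - 2 ^ (n + 1)), β n k * β n (m - k)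
        - β 0 (m + 1 - 2 ^ (n + 1))))
    (m : ℕ) :
    ∃ z : ℤ, (2 : ℚ) ^ (2 * ((m : ℤ) + 1) - (s 0 (m + 1) : ℤ)) * β 0 (m + 1) = (z : ℚ) := by
  obtain ⟨z, hz⟩ := main_PP β hβ0 hβzero hβrec (m + 1) (by omega) 0
  refine ⟨z, ?_⟩
  rw [← hz]
  congr 2
  unfold ff
  push_cast
  ring
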